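/- arXiv:1408.5200 — 6 statements merged into one kernel-verified Lean document; each statement's English description precedes it below -/
import Mathlib

section
/- Let T̂(z) be the N-site reflection monodromy matrix over a commutative ℂ-algebra R. Then T̂(−z) = −σ₃ T̂(z) σ₃⁻¹ and T̂(z⁻¹)ᵗ = σ₂ T̂(z) σ₂⁻¹, where σ₂ = [[0,−1],[1,0]], σ₃ = [[1,0],[0,−1]]. Equivalently, the paper's monodromy matrix T(z) = (z−z⁻¹)⁻¹T̂(z) satisfies T(−z) = σ₃T(z)σ₃⁻¹ and T(z⁻¹)ᵗ = −σ₂T(z)σ₂⁻¹. -/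
open LaurentPolynomial

noncomputable section

/-- The local Lax matrix `L(u) = [[u k − u⁻¹ k⁻¹, e], [f, u k⁻¹ − u⁻¹ k]]` of the XXZ chain,
as a 2×2 matrix over the Laurent polynomial ring `R[z,z⁻¹]`; the argument `v` stands for the
inverse `u⁻¹` of the unit `u`. -/
noncomputable def lax {R : Type} [CommRing R] (e f k kinv : R)
    (u v : LaurentPolynomial R) : Matrix (Fin 2) (Fin 2) (LaurentPolynomial R) :=
  !![u * C k - v * C kinv, C e; C f, u * C kinv - v * C k]

/-- The diagonal reflection matrix `K(z) = diag(ξz − ξ⁻¹z⁻¹, ξz⁻¹ − ξ⁻¹z)`, where `v` stands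
for `z⁻¹`. -/
noncomputable def refK {R : Type} [CommRing R] [Algebra ℂ R] (ξ : ℂ)
    (u v : LaurentPolynomial R) : Matrix (Fin 2) (Fin 2) (LaurentPolynomial R) :=
  !![algebraMap ℂ (LaurentPolynomial R) ξ * u - algebraMap ℂ (LaurentPolynomial R) ξ⁻¹ * v, 0;
     0, algebraMap ℂ (LaurentPolynomial R) ξ * v - algebraMap ℂ (LaurentPolynomial R) ξ⁻¹ * u]

/-- The reflection monodromy matrix
`T̂(z) = L₁(a₁z)⋯L_N(a_N z)·K(z)·L_N(z/a_N)⋯L₁(z/a₁)`, evaluated at a general unit `u`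
(with `v` standing for `u⁻¹`). -/
noncomputable def thatGen {R : Type} [CommRing R] [Algebra ℂ R] (N : ℕ)
    (e f k kinv : Fin N → R) (ξ : ℂ) (a : Fin N → ℂ) (u v : LaurentPolynomial R) :
    Matrix (Fin 2) (Fin 2) (LaurentPolynomial R) :=
  (List.ofFn fun i => lax (e i) (f i) (k i) (kinv i)
      (algebraMap ℂ (LaurentPolynomial R) (a i) * u)
      (algebraMap ℂ (LaurentPolynomial R) (a i)⁻¹ * v)).prod
  * refK ξ u v *
  ((List.ofFn fun i => lax (e i) (f i) (k i) (kinv i)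
      (algebraMap ℂ (LaurentPolynomial R) (a i)⁻¹ * u)
      (algebraMap ℂ (LaurentPolynomial R) (a i) * v)).reverse).prod

/-- The reflection monodromy matrix `T̂(z)` at `u = z`. -/
noncomputable def That {R : Type} [CommRing R] [Algebra ℂ R] (N : ℕ)
    (e f k kinv : Fin N → R) (ξ : ℂ) (a : Fin N → ℂ) :
    Matrix (Fin 2) (Fin 2) (LaurentPolynomial R) :=
  thatGen N e f k kinv ξ a (T 1) (T (-1))

theorem sandwich_conj {ι A : Type} [Ring A] (S Sp : A) (h : Sp * S = 1)
    (F G Fp Gp : ι → A) (hF : ∀ i, Fp i = -(S * F i * Sp)) (hG : ∀ i, Gp i = -(S * G i * Sp))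
    (K Kp : A) (hK : Kp = S * K * Sp) (l : List ι) :
    (l.map Fp).prod * Kp * (l.map Gp).reverse.prod
      = S * ((l.map F).prod * K * (l.map G).reverse.prod) * Sp := by
  have hp : ∀ x : A, Sp * (S * x) = x := fun x => by rw [← mul_assoc, h, one_mul]
  induction l with
  | nil => simp [hK]
  | cons i l ih =>
    have e1 : ((i :: l).map Fp).prod * Kp * ((i :: l).map Gp).reverse.prod
        = Fp i * ((l.map Fp).prod * Kp * (l.map Gp).reverse.prod) * Gp i := by
      simp [mul_assoc]
    rw [e1, ih, hF, hG]
    simp [mul_assoc, hp]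

theorem sandwich_transpose {ι A : Type} [CommRing A]
    (F G : ι → Matrix (Fin 2) (Fin 2) A) (K : Matrix (Fin 2) (Fin 2) A) (l : List ι) :
    ((l.map F).prod * K * (l.map G).reverse.prod).transpose
      = (l.map fun i => (G i).transpose).prod * K.transpose
        * (l.map fun i => (F i).transpose).reverse.prod := by
  induction l with
  | nil => simp
  | cons i l ih =>
    have e1 : ∀ (F G : ι → Matrix (Fin 2) (Fin 2) A) (K : Matrix (Fin 2) (Fin 2) A),
        ((i :: l).map F).prod * K * ((i :: l).map G).reverse.prod
        = F i * ((l.map F).prod * K * (l.map G).reverse.prod) * G i := by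
      intro F G K
      simp [mul_assoc]
    rw [e1, e1, ← ih]
    simp only [Matrix.transpose_mul, mul_assoc]

/-- the symmetries `T̂(−z) = −σ₃ T̂(z) σ₃⁻¹` and `T̂(z⁻¹)ᵗ = σ₂ T̂(z) σ₂⁻¹`
of the reflection monodromy matrix, where `σ₂ = [[0,−1],[1,0]]`, `σ₃ = [[1,0],[0,−1]]`. -/
theorem reflection_monodromy_symmetries (R : Type) [CommRing R] [Algebra ℂ R]
    (N : ℕ) (hN : 1 ≤ N) (e f k kinv : Fin N → R) (hk : ∀ i, k i * kinv i = 1)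
    (ξ : ℂ) (hξ : ξ ≠ 0) (a : Fin N → ℂ) (ha : ∀ i, a i ≠ 0) :
    thatGen N e f k kinv ξ a (-(T 1)) (-(T (-1)))
        = -((!![1, 0; 0, -1] : Matrix (Fin 2) (Fin 2) (LaurentPolynomial R))
            * That N e f k kinv ξ a
            * (!![1, 0; 0, -1] : Matrix (Fin 2) (Fin 2) (LaurentPolynomial R))⁻¹) ∧
    (thatGen N e f k kinv ξ a (T (-1)) (T 1)).transpose
        = (!![0, -1; 1, 0] : Matrix (Fin 2) (Fin 2) (LaurentPolynomial R))
            * That N e f k kinv ξ a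
            * (!![0, -1; 1, 0] : Matrix (Fin 2) (Fin 2) (LaurentPolynomial R))⁻¹ := by
  have i3 : (!![1, 0; 0, -1] : Matrix (Fin 2) (Fin 2) (LaurentPolynomial R))⁻¹
      = !![1, 0; 0, -1] := by
    apply Matrix.inv_eq_left_inv
    ext i j; fin_cases i <;> fin_cases j <;> simp [Matrix.mul_apply]
  have i2 : (!![0, -1; 1, 0] : Matrix (Fin 2) (Fin 2) (LaurentPolynomial R))⁻¹
      = !![0, 1; -1, 0] := by
    apply Matrix.inv_eq_left_inv
    ext i j; fin_cases i <;> fin_cases j <;> simp [Matrix.mul_apply]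
  rw [i3, i2]
  unfold That thatGen
  simp only [List.ofFn_eq_map]
  constructor
  · rw [← Matrix.neg_mul, ← Matrix.mul_neg, ← Matrix.neg_mul, ← Matrix.mul_neg]
    apply sandwich_conj
    · ext i j; fin_cases i <;> fin_cases j <;> simp
    · intro i
      ext x y; fin_cases x <;> fin_cases y <;> simp [lax] <;> ring
    · intro i
      ext x y; fin_cases x <;> fin_cases y <;> simp [lax] <;> ring
    · ext x y; fin_cases x <;> fin_cases y <;> simp [refK] <;> ring
  · rw [sandwich_transpose]
    apply sandwich_conj
    · ext i j; fin_cases i <;> fin_cases j <;> simp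
    · intro i
      ext x y; fin_cases x <;> fin_cases y <;> simp [lax]
    · intro i
      ext x y; fin_cases x <;> fin_cases y <;> simp [lax]
    · ext x y; fin_cases x <;> fin_cases y <;> simp [refK]

end
end

section
/- Let T̂(z) = [[Â(z), B̂(z)],[Ĉ(z), D̂(z)]] be the N-site reflection monodromy matrix. Then the entries satisfy: Â(z⁻¹) = D̂(z), B̂(z⁻¹) = −B̂(z), Ĉ(z⁻¹) = −Ĉ(z), and Â(−z) = −Â(z), B̂(−z) = B̂(z), Ĉ(−z) = Ĉ(z), D̂(−z) = −D̂(z). -/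
open LaurentPolynomial

noncomputable section

theorem thatGen_succ_aux {R : Type} [CommRing R] [Algebra ℂ R] (N : ℕ)
    (e f k kinv : Fin (N + 1) → R) (ξ : ℂ) (a : Fin (N + 1) → ℂ) (u v : LaurentPolynomial R) :
    thatGen (N + 1) e f k kinv ξ a u v =
      lax (e 0) (f 0) (k 0) (kinv 0) (algebraMap ℂ (LaurentPolynomial R) (a 0) * u)
        (algebraMap ℂ (LaurentPolynomial R) (a 0)⁻¹ * v) *
      thatGen N (fun i => e i.succ) (fun i => f i.succ) (fun i => k i.succ)
        (fun i => kinv i.succ) ξ (fun i => a i.succ) u v *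
      lax (e 0) (f 0) (k 0) (kinv 0) (algebraMap ℂ (LaurentPolynomial R) (a 0)⁻¹ * u)
        (algebraMap ℂ (LaurentPolynomial R) (a 0) * v) := by
  simp only [thatGen, List.ofFn_succ, List.prod_cons, List.reverse_cons, List.prod_append,
    List.prod_nil, mul_one, Matrix.mul_assoc]

theorem thatGen_symm_aux {R : Type} [CommRing R] [Algebra ℂ R] (N : ℕ) :
    ∀ (e f k kinv : Fin N → R) (ξ : ℂ) (a : Fin N → ℂ) (u v : LaurentPolynomial R),
    thatGen N e f k kinv ξ a v u 0 0 = thatGen N e f k kinv ξ a u v 1 1 ∧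
    thatGen N e f k kinv ξ a v u 0 1 = -(thatGen N e f k kinv ξ a u v 0 1) ∧
    thatGen N e f k kinv ξ a v u 1 0 = -(thatGen N e f k kinv ξ a u v 1 0) ∧
    thatGen N e f k kinv ξ a v u 1 1 = thatGen N e f k kinv ξ a u v 0 0 ∧
    thatGen N e f k kinv ξ a (-u) (-v) 0 0 = -(thatGen N e f k kinv ξ a u v 0 0) ∧
    thatGen N e f k kinv ξ a (-u) (-v) 0 1 = thatGen N e f k kinv ξ a u v 0 1 ∧
    thatGen N e f k kinv ξ a (-u) (-v) 1 0 = thatGen N e f k kinv ξ a u v 1 0 ∧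
    thatGen N e f k kinv ξ a (-u) (-v) 1 1 = -(thatGen N e f k kinv ξ a u v 1 1) := by
  induction N with
  | zero =>
    intro e f k kinv ξ a u v
    refine ⟨?_, ?_, ?_, ?_, ?_, ?_, ?_, ?_⟩ <;> simp [thatGen, refK] <;> ring
  | succ n ih =>
    intro e f k kinv ξ a u v
    obtain ⟨h1, h2, h3, h4, h5, h6, h7, h8⟩ := ih (fun i => e i.succ) (fun i => f i.succ)
      (fun i => k i.succ) (fun i => kinv i.succ) ξ (fun i => a i.succ) u v
    simp only [thatGen_succ_aux, Matrix.mul_apply, Fin.sum_univ_two, h1, h2, h3, h4, h5, h6,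
      h7, h8]
    refine ⟨?_, ?_, ?_, ?_, ?_, ?_, ?_, ?_⟩ <;>
      simp only [lax, Matrix.of_apply, Matrix.cons_val_zero, Matrix.cons_val_one,
        Matrix.cons_val', Matrix.cons_val_fin_one] <;> ring

/-- the symmetries of the entries `T̂(z) = [[Â(z), B̂(z)],[Ĉ(z), D̂(z)]]` of the
reflection monodromy matrix: `Â(z⁻¹) = D̂(z)`, `B̂(z⁻¹) = −B̂(z)`, `Ĉ(z⁻¹) = −Ĉ(z)`, and
`Â(−z) = −Â(z)`, `B̂(−z) = B̂(z)`, `Ĉ(−z) = Ĉ(z)`, `D̂(−z) = −D̂(z)`. -/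
theorem reflection_monodromy_entry_symmetries (R : Type) [CommRing R] [Algebra ℂ R]
    (N : ℕ) (hN : 1 ≤ N) (e f k kinv : Fin N → R) (hk : ∀ i, k i * kinv i = 1)
    (ξ : ℂ) (hξ : ξ ≠ 0) (a : Fin N → ℂ) (ha : ∀ i, a i ≠ 0) :
    letI Tz := thatGen N e f k kinv ξ a (T 1) (T (-1))
    letI Tzinv := thatGen N e f k kinv ξ a (T (-1)) (T 1)
    letI Tnegz := thatGen N e f k kinv ξ a (-(T 1)) (-(T (-1)))
    Tzinv 0 0 = Tz 1 1 ∧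
    Tzinv 0 1 = -(Tz 0 1) ∧
    Tzinv 1 0 = -(Tz 1 0) ∧
    Tnegz 0 0 = -(Tz 0 0) ∧
    Tnegz 0 1 = Tz 0 1 ∧
    Tnegz 1 0 = Tz 1 0 ∧
    Tnegz 1 1 = -(Tz 1 1) := by
  obtain ⟨h1, h2, h3, -, h5, h6, h7, h8⟩ := thatGen_symm_aux N e f k kinv ξ a (T 1) (T (-1))
  exact ⟨h1, h2, h3, h5, h6, h7, h8⟩

end
end

section
/- Let t̂(z) = (1/2)(Â(z) + D̂(z)) be half the trace of the N-site reflection monodromy matrix T̂(z). Then t̂(z⁻¹) = t̂(z) and t̂(−z) = −t̂(z), and there exist unique elements P₀, P₁, …, P_N ∈ R (the reflection Hamiltonians) such that 2·t̂(z) = (z + z⁻¹)·(P₀ + Σ_{j=1}^{N} P_j·(z^{2j} + z^{−2j})/2) in R[z,z⁻¹]. -/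
open LaurentPolynomial

noncomputable section

/-- `t̂(z) = (1/2)·tr T̂(z)`, the reflection transfer matrix multiplied by `(z−z⁻¹)`. -/
noncomputable def tHat {R : Type} [CommRing R] [Algebra ℂ R] (N : ℕ)
    (e f k kinv : Fin N → R) (ξ : ℂ) (a : Fin N → ℂ) : LaurentPolynomial R :=
  (2 : ℂ)⁻¹ • (That N e f k kinv ξ a).trace

/-- `Pv : Fin (N+1) → R` is the family of reflection Hamiltonians:
`2·t̂(z) = (z + z⁻¹)·(P₀ + Σ_{j=1}^{N} P_j·(z^{2j} + z^{−2j})/2)`. -/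
def IsReflectionHamiltonians {R : Type} [CommRing R] [Algebra ℂ R] (N : ℕ)
    (e f k kinv : Fin N → R) (ξ : ℂ) (a : Fin N → ℂ) (Pv : Fin (N + 1) → R) : Prop :=
  (2 : ℂ) • tHat N e f k kinv ξ a
    = (T 1 + T (-1)) * (C (Pv 0) + ∑ j : Fin N, C (Pv j.succ) *
        ((2 : ℂ)⁻¹ • (T (2 * (j.1 + 1) : ℤ) + T (-(2 * (j.1 + 1) : ℤ)))))

/-- `t̂(u) = (1/2)·tr T̂(u)` at a general unit `u` (with `v` standing for `u⁻¹`). -/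
noncomputable def tHatGen {R : Type} [CommRing R] [Algebra ℂ R] (N : ℕ)
    (e f k kinv : Fin N → R) (ξ : ℂ) (a : Fin N → ℂ) (u v : LaurentPolynomial R) :
    LaurentPolynomial R :=
  (2 : ℂ)⁻¹ • (thatGen N e f k kinv ξ a u v).trace

set_option linter.unusedSectionVars false

theorem prod_neg_adj {A : Type} [CommRing A] (l : List (Matrix (Fin 2) (Fin 2) A)) :
    (l.map fun M => -M.adjugate).prod = (-1 : A) ^ l.length • (l.reverse.prod).adjugate := by
  induction l with
  | nil => simp
  | cons M l ih =>
    simp only [List.map_cons, List.prod_cons, ih, List.reverse_cons, List.prod_append,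
      List.prod_nil, mul_one, Matrix.adjugate_mul_distrib, List.length_cons, pow_succ]
    simp

/-- conjugation by diag(1,-1) -/
def sconj {A : Type} [CommRing A] (M : Matrix (Fin 2) (Fin 2) A) : Matrix (Fin 2) (Fin 2) A :=
  !![M 0 0, -M 0 1; -M 1 0, M 1 1]

theorem sconj_mul {A : Type} [CommRing A] (M M' : Matrix (Fin 2) (Fin 2) A) :
    sconj (M * M') = sconj M * sconj M' := by
  ext i j
  fin_cases i <;> fin_cases j <;> simp [sconj, Matrix.mul_apply, Fin.sum_univ_two] <;> ring

theorem sconj_one {A : Type} [CommRing A] :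
    sconj (1 : Matrix (Fin 2) (Fin 2) A) = 1 := by
  ext i j
  fin_cases i <;> fin_cases j <;> simp [sconj]

theorem prod_neg_sconj {A : Type} [CommRing A] (l : List (Matrix (Fin 2) (Fin 2) A)) :
    (l.map fun M => -sconj M).prod = (-1 : A) ^ l.length • sconj l.prod := by
  induction l with
  | nil => simp [sconj_one]
  | cons M l ih =>
    simp only [List.map_cons, List.prod_cons, ih, sconj_mul, List.length_cons, pow_succ]
    simp

theorem lax_swap {R : Type} [CommRing R] (e f k kinv : R) (u v : LaurentPolynomial R) :
    lax e f k kinv v u = -(lax e f k kinv u v).adjugate := by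
  ext i j
  fin_cases i <;> fin_cases j <;> simp [lax, Matrix.adjugate_fin_two]

theorem lax_neg {R : Type} [CommRing R] (e f k kinv : R) (u v : LaurentPolynomial R) :
    lax e f k kinv (-u) (-v) = -sconj (lax e f k kinv u v) := by
  ext i j
  fin_cases i <;> fin_cases j <;> simp [lax, sconj] <;> ring

section
variable {R : Type} [CommRing R] [Algebra ℂ R]

theorem refK_swap (ξ : ℂ) (u v : LaurentPolynomial R) :
    refK ξ v u = (refK ξ u v).adjugate := by
  ext i j
  fin_cases i <;> fin_cases j <;> simp [refK, Matrix.adjugate_fin_two]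

theorem refK_neg (ξ : ℂ) (u v : LaurentPolynomial R) :
    refK ξ (-u) (-v) = -sconj (refK ξ u v) := by
  ext i j
  fin_cases i <;> fin_cases j <;> simp [refK, sconj] <;> ring

theorem thatGen_swap (N : ℕ) (e f k kinv : Fin N → R) (ξ : ℂ) (a : Fin N → ℂ)
    (u v : LaurentPolynomial R) :
    thatGen N e f k kinv ξ a v u = (thatGen N e f k kinv ξ a u v).adjugate := by
  set l1 := List.ofFn fun i => lax (e i) (f i) (k i) (kinv i)
      (algebraMap ℂ (LaurentPolynomial R) (a i) * u)
      (algebraMap ℂ (LaurentPolynomial R) (a i)⁻¹ * v) with h1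
  set l2 := List.ofFn fun i => lax (e i) (f i) (k i) (kinv i)
      (algebraMap ℂ (LaurentPolynomial R) (a i)⁻¹ * u)
      (algebraMap ℂ (LaurentPolynomial R) (a i) * v) with h2
  have e1 : thatGen N e f k kinv ξ a u v = l1.prod * refK ξ u v * l2.reverse.prod := rfl
  have e2 : thatGen N e f k kinv ξ a v u = (l2.map fun M => -M.adjugate).prod * refK ξ v u *
      (l1.reverse.map fun M => -M.adjugate).prod := by
    rw [List.map_reverse, h1, h2, List.map_ofFn, List.map_ofFn]
    unfold thatGen
    congr 3
    · congr 2; funext i; exact lax_swap _ _ _ _ _ _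
    · congr 2; funext i; exact lax_swap _ _ _ _ _ _
  have hl1 : l1.length = N := by simp [h1]
  have hl2 : l2.length = N := by simp [h2]
  rw [e2, e1, prod_neg_adj, prod_neg_adj, List.reverse_reverse, List.length_reverse, hl1, hl2,
    refK_swap, Matrix.adjugate_mul_distrib, Matrix.adjugate_mul_distrib]
  simp only [Matrix.smul_mul, Matrix.mul_smul, smul_smul, ← pow_add, ← two_mul, pow_mul, neg_one_sq, one_pow,
    one_smul, mul_assoc]

theorem thatGen_neg (N : ℕ) (e f k kinv : Fin N → R) (ξ : ℂ) (a : Fin N → ℂ)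
    (u v : LaurentPolynomial R) :
    thatGen N e f k kinv ξ a (-u) (-v) = -sconj (thatGen N e f k kinv ξ a u v) := by
  set l1 := List.ofFn fun i => lax (e i) (f i) (k i) (kinv i)
      (algebraMap ℂ (LaurentPolynomial R) (a i) * u)
      (algebraMap ℂ (LaurentPolynomial R) (a i)⁻¹ * v) with h1
  set l2 := List.ofFn fun i => lax (e i) (f i) (k i) (kinv i)
      (algebraMap ℂ (LaurentPolynomial R) (a i)⁻¹ * u)
      (algebraMap ℂ (LaurentPolynomial R) (a i) * v) with h2
  have e1 : thatGen N e f k kinv ξ a u v = l1.prod * refK ξ u v * l2.reverse.prod := rfl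
  have e2 : thatGen N e f k kinv ξ a (-u) (-v) =
      (l1.map fun M => -sconj M).prod * refK ξ (-u) (-v) *
      (l2.reverse.map fun M => -sconj M).prod := by
    rw [List.map_reverse, h1, h2, List.map_ofFn, List.map_ofFn]
    unfold thatGen
    congr 3
    · congr 2; funext i
      simp only [mul_neg]; exact lax_neg _ _ _ _ _ _
    · congr 2; funext i
      simp only [mul_neg]; exact lax_neg _ _ _ _ _ _
  have hl1 : l1.length = N := by simp [h1]
  have hl2 : l2.length = N := by simp [h2]
  rw [e2, e1, prod_neg_sconj, prod_neg_sconj, List.length_reverse, hl1, hl2,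
    refK_neg, sconj_mul, sconj_mul]
  simp only [Matrix.smul_mul, Matrix.mul_smul, smul_smul, ← pow_add, ← two_mul, pow_mul, neg_one_sq, one_pow,
    one_smul, mul_assoc, neg_mul, mul_neg]

theorem trace_swap (N : ℕ) (e f k kinv : Fin N → R) (ξ : ℂ) (a : Fin N → ℂ)
    (u v : LaurentPolynomial R) :
    (thatGen N e f k kinv ξ a v u).trace = (thatGen N e f k kinv ξ a u v).trace := by
  rw [thatGen_swap]
  simp [Matrix.trace_fin_two, Matrix.adjugate_fin_two, add_comm]

theorem trace_odd (N : ℕ) (e f k kinv : Fin N → R) (ξ : ℂ) (a : Fin N → ℂ)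
    (u v : LaurentPolynomial R) :
    (thatGen N e f k kinv ξ a (-u) (-v)).trace = -(thatGen N e f k kinv ξ a u v).trace := by
  rw [thatGen_neg]
  simp [Matrix.trace_fin_two, sconj, add_comm]

theorem algMap_C (c : ℂ) :
    algebraMap ℂ (LaurentPolynomial R) c = C (algebraMap ℂ R c) := rfl

theorem lax_map (φ : LaurentPolynomial R →+* LaurentPolynomial R) (hφ : ∀ r, φ (C r) = C r)
    (e f k kinv : R) (u v : LaurentPolynomial R) :
    φ.mapMatrix (lax e f k kinv u v) = lax e f k kinv (φ u) (φ v) := by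
  ext i j : 2
  fin_cases i <;> fin_cases j <;> simp [lax, hφ]

theorem refK_map (φ : LaurentPolynomial R →+* LaurentPolynomial R) (hφ : ∀ r, φ (C r) = C r)
    (ξ : ℂ) (u v : LaurentPolynomial R) :
    φ.mapMatrix (refK ξ u v) = refK ξ (φ u) (φ v) := by
  ext i j : 2
  fin_cases i <;> fin_cases j <;> simp [refK, hφ, algMap_C]

theorem thatGen_map (φ : LaurentPolynomial R →+* LaurentPolynomial R) (hφ : ∀ r, φ (C r) = C r)
    (N : ℕ) (e f k kinv : Fin N → R) (ξ : ℂ) (a : Fin N → ℂ)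
    (u v : LaurentPolynomial R) :
    φ.mapMatrix (thatGen N e f k kinv ξ a u v) = thatGen N e f k kinv ξ a (φ u) (φ v) := by
  unfold thatGen
  rw [map_mul, map_mul, map_list_prod, map_list_prod, refK_map φ hφ, List.map_reverse,
    List.map_ofFn, List.map_ofFn]
  have h (g : Fin N → ℂ) (g' : Fin N → ℂ) : (φ.mapMatrix ∘ fun i => lax (e i) (f i) (k i) (kinv i)
      (algebraMap ℂ (LaurentPolynomial R) (g i) * u)
      (algebraMap ℂ (LaurentPolynomial R) (g' i) * v)) = fun i => lax (e i) (f i) (k i) (kinv i)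
      (algebraMap ℂ (LaurentPolynomial R) (g i) * φ u)
      (algebraMap ℂ (LaurentPolynomial R) (g' i) * φ v) := by
    funext i
    simp only [Function.comp]
    rw [lax_map φ hφ, map_mul, map_mul, algMap_C, algMap_C, hφ, hφ]
  rw [h, h]

/-- Laurent polynomials of degree at most `d` with the parity of `d`. -/
def VV (R : Type) [CommRing R] (d : ℤ) : Submodule R (LaurentPolynomial R) :=
  Submodule.span R {p | ∃ n : ℤ, |n| ≤ d ∧ n % 2 = d % 2 ∧ p = T n}

theorem T_mem_VV {n d : ℤ} (h : |n| ≤ d) (h' : n % 2 = d % 2) :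
    (T n : LaurentPolynomial R) ∈ VV R d :=
  Submodule.subset_span ⟨n, h, h', rfl⟩

theorem VV_mul {p q : LaurentPolynomial R} {d d' c : ℤ} (hp : p ∈ VV R d) (hq : q ∈ VV R d')
    (h : d + d' ≤ c) (h' : (d + d') % 2 = c % 2) : p * q ∈ VV R c := by
  have h0 := Submodule.mul_mem_mul hp hq
  rw [VV, VV, Submodule.span_mul_span] at h0
  refine Submodule.span_le.2 ?_ h0
  rintro _ ⟨_, ⟨n, hn, hn', rfl⟩, _, ⟨m, hm, hm', rfl⟩, rfl⟩
  simp only [← T_add]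
  refine T_mem_VV ?_ ?_
  · exact (abs_add_le _ _).trans (by linarith)
  · omega

theorem C_mul_mem {p : LaurentPolynomial R} {d : ℤ} (r : R) (hp : p ∈ VV R d) :
    C r * p ∈ VV R d := by
  rw [← smul_eq_C_mul]; exact Submodule.smul_mem _ _ hp

/-- matrices with diagonal in `VV d`, off-diagonal in `VV (d-1)` -/
def WW (d : ℤ) (M : Matrix (Fin 2) (Fin 2) (LaurentPolynomial R)) : Prop :=
  M 0 0 ∈ VV R d ∧ M 1 1 ∈ VV R d ∧ M 0 1 ∈ VV R (d - 1) ∧ M 1 0 ∈ VV R (d - 1)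

theorem WW_one : WW 0 (1 : Matrix (Fin 2) (Fin 2) (LaurentPolynomial R)) := by
  have : (1 : LaurentPolynomial R) ∈ VV R 0 := by
    rw [← T_zero]; exact T_mem_VV (by simp) rfl
  refine ⟨?_, ?_, ?_, ?_⟩ <;> simp [this]

theorem WW_mul {d d' : ℤ} {M M' : Matrix (Fin 2) (Fin 2) (LaurentPolynomial R)}
    (h : WW d M) (h' : WW d' M') : WW (d + d') (M * M') := by
  obtain ⟨h1, h2, h3, h4⟩ := h
  obtain ⟨k1, k2, k3, k4⟩ := h'
  refine ⟨?_, ?_, ?_, ?_⟩ <;> rw [Matrix.mul_apply, Fin.sum_univ_two] <;>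
    refine Submodule.add_mem _ (VV_mul (by assumption) (by assumption) ?_ ?_)
      (VV_mul (by assumption) (by assumption) ?_ ?_) <;> omega

theorem WW_prod (l : List (Matrix (Fin 2) (Fin 2) (LaurentPolynomial R)))
    (h : ∀ M ∈ l, WW 1 M) : WW l.length l.prod := by
  induction l with
  | nil => simpa using WW_one
  | cons M l ih =>
    rw [List.prod_cons, List.length_cons]
    have := WW_mul (h M (by simp)) (ih fun M hM => h M (by simp [hM]))
    push_cast
    rwa [add_comm]

theorem WW_lax (e f k kinv : R) (c c' : ℂ) :
    WW 1 (lax e f k kinv (algebraMap ℂ (LaurentPolynomial R) c * T 1)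
      (algebraMap ℂ (LaurentPolynomial R) c' * T (-1))) := by
  have h1 : (T 1 : LaurentPolynomial R) ∈ VV R 1 := T_mem_VV (by simp) rfl
  have h2 : (T (-1) : LaurentPolynomial R) ∈ VV R 1 := T_mem_VV (by simp) rfl
  have h0 : (T 0 : LaurentPolynomial R) ∈ VV R (1 - 1) := T_mem_VV (by simp) rfl
  have h3 (r : R) : C r ∈ VV R (1 - 1) := by
    have := C_mul_mem r h0
    rwa [T_zero, mul_one] at this
  simp only [algMap_C]
  refine ⟨?_, ?_, h3 e, h3 f⟩ <;> simp only [lax, Matrix.of_apply, Matrix.cons_val] <;>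
    refine Submodule.sub_mem _ ?_ ?_ <;> rw [mul_comm] <;>
    exact C_mul_mem _ (C_mul_mem _ (by assumption))

theorem WW_refK (ξ : ℂ) : WW 1 (refK (R := R) ξ (T 1) (T (-1))) := by
  have h1 : (T 1 : LaurentPolynomial R) ∈ VV R 1 := T_mem_VV (by simp) rfl
  have h2 : (T (-1) : LaurentPolynomial R) ∈ VV R 1 := T_mem_VV (by simp) rfl
  simp only [refK, algMap_C]
  refine ⟨?_, ?_, Submodule.zero_mem _, Submodule.zero_mem _⟩ <;>
    simp only [Matrix.of_apply, Matrix.cons_val] <;>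
    exact Submodule.sub_mem _ (C_mul_mem _ (by assumption)) (C_mul_mem _ (by assumption))

theorem WW_thatGen (N : ℕ) (e f k kinv : Fin N → R) (ξ : ℂ) (a : Fin N → ℂ) :
    WW (2 * N + 1) (thatGen N e f k kinv ξ a (T 1) (T (-1))) := by
  have hl (g g' : Fin N → ℂ) : ∀ M ∈ List.ofFn fun i => lax (e i) (f i) (k i) (kinv i)
      (algebraMap ℂ (LaurentPolynomial R) (g i) * T 1)
      (algebraMap ℂ (LaurentPolynomial R) (g' i) * T (-1)), WW 1 M := by
    intro M hM
    obtain ⟨i, rfl⟩ := (List.mem_ofFn' _ _).1 hM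
    exact WW_lax _ _ _ _ _ _
  have h1 := WW_prod _ (hl a fun i => (a i)⁻¹)
  have h2 := WW_prod _ (fun M hM => hl (fun i => (a i)⁻¹) a M (List.mem_reverse.1 hM))
  have := WW_mul (WW_mul h1 (WW_refK ξ)) h2
  rw [List.length_reverse, List.length_ofFn, List.length_ofFn] at this
  have e3 : (2 * N + 1 : ℤ) = N + 1 + N := by ring
  rw [e3]
  exact this

/-- the Hamiltonian expansion -/
def Ex (N : ℕ) (Pv : Fin (N + 1) → R) : LaurentPolynomial R :=
  C (Pv 0) + ∑ j : Fin N, C (Pv j.succ) *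
        ((2 : ℂ)⁻¹ • (T (2 * (j.1 + 1) : ℤ) + T (-(2 * (j.1 + 1) : ℤ))))

theorem Ex_add (N : ℕ) (P Q : Fin (N + 1) → R) : Ex N (P + Q) = Ex N P + Ex N Q := by
  simp only [Ex, Pi.add_apply, map_add, add_mul, Finset.sum_add_distrib]
  ring

theorem Ex_smul (N : ℕ) (r : R) (P : Fin (N + 1) → R) : Ex N (r • P) = C r * Ex N P := by
  simp only [Ex, Pi.smul_apply, smul_eq_mul, map_mul, mul_add, Finset.mul_sum, mul_assoc]

/-- linear map of the expansion -/
def Phi (N : ℕ) : (Fin (N + 1) → R) →ₗ[R] LaurentPolynomial R where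
  toFun P := (T 1 + T (-1)) * Ex N P
  map_add' P Q := by rw [Ex_add, mul_add]
  map_smul' r P := by rw [Ex_smul, RingHom.id_apply, smul_eq_C_mul]; ring

theorem csmul_C (c : ℂ) (p : LaurentPolynomial R) : c • p = C (algebraMap ℂ R c) * p := by
  rw [Algebra.smul_def, algMap_C]

theorem two_half : (C (algebraMap ℂ R 2) * C (algebraMap ℂ R (2 : ℂ)⁻¹) : LaurentPolynomial R) = 1 := by
  rw [← map_mul, ← map_mul]; norm_num

theorem Phi_single_succ (N : ℕ) (j : Fin N) :
    Phi (R := R) N (Pi.single j.succ (algebraMap ℂ R 2)) =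
      (T 1 + T (-1)) * (T (2 * (j.1 + 1) : ℤ) + T (-(2 * (j.1 + 1) : ℤ))) := by
  show _ * Ex N _ = _
  congr 1
  unfold Ex
  rw [Finset.sum_eq_single j]
  · rw [Pi.single_eq_same, csmul_C, ← mul_assoc, two_half]
    simp
  · intro b _ hb
    rw [Pi.single_eq_of_ne (by simpa using hb)]; simp
  · simp

theorem Phi_single_zero (N : ℕ) :
    Phi (R := R) N (Pi.single 0 1) = T 1 + T (-1) := by
  show _ * Ex N _ = _
  unfold Ex
  simp

theorem sym_mem (N m : ℕ) (hm : m ≤ N) :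
    (T (2 * m + 1) + T (-(2 * m + 1)) : LaurentPolynomial R) ∈ LinearMap.range (Phi (R := R) N) := by
  induction m with
  | zero => exact ⟨_, by rw [Phi_single_zero]; simp⟩
  | succ m ih =>
    have h := ih (by omega)
    have h2 : Phi (R := R) N (Pi.single (Fin.succ ⟨m, hm⟩) (algebraMap ℂ R 2)) ∈
      LinearMap.range (Phi (R := R) N) := ⟨_, rfl⟩
    rw [Phi_single_succ] at h2
    have h3 := Submodule.sub_mem _ h2 h
    convert h3 using 1
    simp only [add_mul, mul_add, ← T_add]
    push_cast
    ring_nf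

theorem sym_mem_int (N : ℕ) (n : ℤ) (hn : |n| ≤ 2 * N + 1) (h : n % 2 = (2 * N + 1) % 2) :
    (T n + T (-n) : LaurentPolynomial R) ∈ LinearMap.range (Phi (R := R) N) := by
  rw [abs_le] at hn
  rcases le_total 0 n with h0 | h0
  · have := sym_mem (R := R) N ((n - 1) / 2).toNat (by omega)
    have e : 2 * (((n - 1) / 2).toNat : ℤ) + 1 = n := by omega
    rwa [e] at this
  · have := sym_mem (R := R) N ((-n - 1) / 2).toNat (by omega)
    have e : 2 * (((-n - 1) / 2).toNat : ℤ) + 1 = -n := by omega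
    rw [e, neg_neg] at this
    rwa [add_comm (T n)]

theorem VV_sym (N : ℕ) (p : LaurentPolynomial R) (hp : p ∈ VV R (2 * N + 1)) :
    p + invert p ∈ LinearMap.range (Phi (R := R) N) := by
  induction hp using Submodule.span_induction with
  | mem x hx =>
    obtain ⟨n, h, h', rfl⟩ := hx
    rw [invert_T]; exact sym_mem_int N n h h'
  | zero => simp
  | add x y _ _ hx hy =>
    have := Submodule.add_mem _ hx hy
    rw [map_add]
    convert this using 1
    ring
  | smul r x _ hx =>
    have := Submodule.smul_mem _ r hx
    rwa [smul_add, ← map_smul] at this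

theorem exists_ham (N : ℕ) (p : LaurentPolynomial R) (hp : p ∈ VV R (2 * N + 1))
    (hs : invert p = p) : p ∈ LinearMap.range (Phi (R := R) N) := by
  have h := Submodule.smul_mem _ (algebraMap ℂ R (2 : ℂ)⁻¹) (VV_sym N p hp)
  rw [hs, smul_eq_C_mul, ← two_mul] at h
  convert h using 1
  have := two_half (R := R)
  rw [map_ofNat, map_ofNat] at this
  linear_combination -p * this

theorem sum_mul_eq_zero (q : LaurentPolynomial R) (h : (T 1 + T (-1)) * q = 0) : q = 0 := by
  have h2 : (T 2 + 1) * q = 0 := by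
    have : (T 1 : LaurentPolynomial R) * ((T 1 + T (-1)) * q) = 0 := by rw [h, mul_zero]
    rw [← mul_assoc, mul_add, ← T_add, ← T_add] at this
    simpa using this
  obtain ⟨n, f', hf⟩ := exists_T_pow q
  have h3 : (Polynomial.toLaurent ((Polynomial.X ^ 2 + Polynomial.C 1) * f') : LaurentPolynomial R) = 0 := by
    rw [map_mul, hf, map_add, Polynomial.toLaurent_X_pow]
    simp only [map_one]
    rw [← mul_assoc]
    push_cast
    rw [h2, zero_mul]
  rw [map_eq_zero_iff _ Polynomial.toLaurent_injective] at h3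
  have hm : (Polynomial.X ^ 2 + Polynomial.C (1 : R)).Monic :=
    Polynomial.monic_X_pow_add_C _ (by norm_num)
  have h4 : f' = 0 := hm.mul_right_eq_zero_iff.1 h3
  rw [h4, map_zero] at hf
  have : q * T n * T (-n) = 0 := by rw [← hf, zero_mul]
  rwa [mul_assoc, ← T_add, add_neg_cancel, T_zero, mul_one] at this

theorem Ex_coeff_succ (N : ℕ) (P : Fin (N + 1) → R) (j : Fin N) :
    (Ex N P).coeff (2 * (j.1 + 1) : ℤ) = P j.succ * algebraMap ℂ R (2 : ℂ)⁻¹ := by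
  have hterm (i : Fin N) : (C (P i.succ) * ((2 : ℂ)⁻¹ • (T (2 * (i.1 + 1) : ℤ) +
      T (-(2 * (i.1 + 1) : ℤ)))) : LaurentPolynomial R).coeff (2 * (j.1 + 1) : ℤ) =
      if i = j then P j.succ * algebraMap ℂ R (2 : ℂ)⁻¹ else 0 := by
    rw [csmul_C, ← mul_assoc, ← map_mul, ← smul_eq_C_mul]
    simp only [AddMonoidAlgebra.coeff_smul, AddMonoidAlgebra.coeff_add, Finsupp.smul_apply,
      Finsupp.add_apply, T_apply]
    rw [if_neg (show ¬ (-(2 * (i.1 + 1) : ℤ) = 2 * (j.1 + 1)) by omega)]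
    by_cases hij : i = j
    · subst hij; simp
    · have : ¬ ((2 * (i.1 + 1) : ℤ) = 2 * (j.1 + 1)) := by
        intro h; apply hij; ext; omega
      rw [if_neg this, if_neg hij]; simp
  unfold Ex
  rw [AddMonoidAlgebra.coeff_add, Finsupp.add_apply, AddMonoidAlgebra.coeff_sum,
    Finsupp.finsetSum_apply, Finset.sum_congr rfl fun i _ => hterm i, C_apply,
    if_neg (by omega)]
  simp

theorem Ex_inj (N : ℕ) (P : Fin (N + 1) → R) (h : Ex N P = 0) : P = 0 := by
  have hs (j : Fin N) : P j.succ = 0 := by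
    have h1 := Ex_coeff_succ N P j
    rw [h] at h1
    have h2 : algebraMap ℂ R (2 : ℂ)⁻¹ * algebraMap ℂ R 2 = 1 := by
      rw [← map_mul]; norm_num
    have h3 : P j.succ * algebraMap ℂ R (2 : ℂ)⁻¹ = 0 := by rw [← h1]; simp
    calc P j.succ = P j.succ * algebraMap ℂ R (2 : ℂ)⁻¹ * algebraMap ℂ R 2 := by
          rw [mul_assoc, h2, mul_one]
      _ = 0 := by rw [h3, zero_mul]
  have h0 : P 0 = 0 := by
    unfold Ex at h
    simp only [hs, map_zero, zero_mul, Finset.sum_const_zero, add_zero] at h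
    have := congrArg (fun q : LaurentPolynomial R => q.coeff 0) h
    simpa using this
  funext i
  refine Fin.cases h0 hs i

end

/-- `t̂(z) = (1/2)(Â(z) + D̂(z))` satisfies `t̂(z⁻¹) = t̂(z)`, `t̂(−z) = −t̂(z)`,
and there exist unique reflection Hamiltonians `P₀, …, P_N ∈ R` with
`2·t̂(z) = (z + z⁻¹)·(P₀ + Σ_{j=1}^{N} P_j·(z^{2j} + z^{−2j})/2)`. -/
theorem transfer_matrix_expansion (R : Type) [CommRing R] [Algebra ℂ R]
    (N : ℕ) (hN : 1 ≤ N) (e f k kinv : Fin N → R) (hk : ∀ i, k i * kinv i = 1)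
    (ξ : ℂ) (hξ : ξ ≠ 0) (a : Fin N → ℂ) (ha : ∀ i, a i ≠ 0) :
    tHatGen N e f k kinv ξ a (T (-1)) (T 1) = tHatGen N e f k kinv ξ a (T 1) (T (-1)) ∧
    tHatGen N e f k kinv ξ a (-(T 1)) (-(T (-1)))
      = -(tHatGen N e f k kinv ξ a (T 1) (T (-1))) ∧
    ∃! Pv : Fin (N + 1) → R, IsReflectionHamiltonians N e f k kinv ξ a Pv := by
  refine ⟨?_, ?_, ?_⟩
  · unfold tHatGen; rw [trace_swap]
  · unfold tHatGen; rw [trace_odd, smul_neg]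
  · have hp : (That N e f k kinv ξ a).trace ∈ VV R (2 * N + 1) := by
      obtain ⟨h1, h2, -, -⟩ := WW_thatGen N e f k kinv ξ a
      rw [Matrix.trace_fin_two]
      exact Submodule.add_mem _ h1 h2
    have hs : invert (That N e f k kinv ξ a).trace = (That N e f k kinv ξ a).trace := by
      have h := thatGen_map ((invert (R := R)).toRingEquiv : LaurentPolynomial R →+* LaurentPolynomial R)
        (fun r => invert_C r) N e f k kinv ξ a (T 1) (T (-1))
      have h2 := congrArg Matrix.trace h
      have h3 : ((invert (R := R)).toRingEquiv : LaurentPolynomial R →+* LaurentPolynomial R) (T 1)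
        = T (-1) := invert_T 1
      have h4 : ((invert (R := R)).toRingEquiv : LaurentPolynomial R →+* LaurentPolynomial R)
        (T (-1)) = T 1 := by simpa using invert_T (R := R) (-1)
      rw [h3, h4, trace_swap] at h2
      refine Eq.trans ?_ h2
      rw [Matrix.trace_fin_two, Matrix.trace_fin_two, map_add]
      rfl
    have key (P : Fin (N + 1) → R) : IsReflectionHamiltonians N e f k kinv ξ a P ↔
        Phi N P = (That N e f k kinv ξ a).trace := by
      unfold IsReflectionHamiltonians tHat
      rw [smul_smul, mul_inv_cancel₀ two_ne_zero, one_smul]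
      exact eq_comm
    obtain ⟨P, hP⟩ := exists_ham N _ hp hs
    refine ⟨P, (key P).2 hP, fun Q hQ => ?_⟩
    have hQ' := (key Q).1 hQ
    have h0 : Phi N (Q - P) = 0 := by rw [map_sub, hQ', hP, sub_self]
    exact sub_eq_zero.1 (Ex_inj N _ (sum_mul_eq_zero _ h0))

end
end

section
/- (The spectral invariant is a polynomial in λ = z² + z⁻².) Let T̂(z) be the N-site reflection monodromy matrix and t̂(z) = (1/2)tr T̂(z). Then there exists a polynomial q ∈ R[X] of degree at most 2N such that t̂(z)² − det T̂(z) = (z − z⁻¹)²·q(z² + z⁻²) in R[z,z⁻¹]; moreover the coefficient of X^{2N} in q equals ((P + P⁻¹)/2)², where P = ξ·Π_{j=1}^{N} k_j². -/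
open LaurentPolynomial

noncomputable section

/-- One step of the recursion, for the decomposed entries of the monodromy matrix. -/
theorem aux_step {R S : Type} [CommRing R] [CommRing S] (φ : R →+* S) (ψ : Polynomial R →+* S)
    (hψ : ∀ r, ψ (Polynomial.C r) = φ r) (z w : S) (hzw : z * w = 1)
    (hX : ψ Polynomial.X = z ^ 2 + w ^ 2)
    (n : ℕ) (h e f k k' a a' : R) (hh : 2 * h = 1) (hk : k * k' = 1) (ha : a * a' = 1)
    (s g b c : Polynomial R) (P P' : R)
    (hs : ∀ m, n < m → s.coeff m = 0) (hg : ∀ m, n < m → g.coeff m = 0)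
    (hb : ∀ m, n ≤ m → b.coeff m = 0) (hc : ∀ m, n ≤ m → c.coeff m = 0)
    (hP : s.coeff n + g.coeff n = P) (hP' : g.coeff n - s.coeff n = P') :
    ∃ s1 g1 b1 c1 : Polynomial R,
      (∀ m, n + 1 < m → s1.coeff m = 0) ∧ (∀ m, n + 1 < m → g1.coeff m = 0) ∧
      (∀ m, n + 1 ≤ m → b1.coeff m = 0) ∧ (∀ m, n + 1 ≤ m → c1.coeff m = 0) ∧
      s1.coeff (n + 1) + g1.coeff (n + 1) = k ^ 2 * P ∧
      g1.coeff (n + 1) - s1.coeff (n + 1) = k' ^ 2 * P' ∧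
      !![φ a * z * φ k - φ a' * w * φ k', φ e; φ f, φ a * z * φ k' - φ a' * w * φ k] *
        !![(z + w) * ψ s + (z - w) * ψ g, (z ^ 2 - w ^ 2) * ψ b;
           (z ^ 2 - w ^ 2) * ψ c, (z + w) * ψ s - (z - w) * ψ g] *
        !![φ a' * z * φ k - φ a * w * φ k', φ e; φ f, φ a' * z * φ k' - φ a * w * φ k]
      = !![(z + w) * ψ s1 + (z - w) * ψ g1, (z ^ 2 - w ^ 2) * ψ b1;
           (z ^ 2 - w ^ 2) * ψ c1, (z + w) * ψ s1 - (z - w) * ψ g1] := by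
  have hh' : 2 * φ h = 1 := by rw [← map_ofNat φ 2, ← map_mul, hh, map_one]
  have hk1 : φ k * φ k' = 1 := by rw [← map_mul, hk, map_one]
  have ha1 : φ a * φ a' = 1 := by rw [← map_mul, ha, map_one]
  let L (x y u v : R) : Polynomial R :=
    Polynomial.C x * s + Polynomial.C y * g + Polynomial.C u * b + Polynomial.C v * c
  have hL (x y u v : R) : ψ (L x y u v) = φ x * ψ s + φ y * ψ g + φ u * ψ b + φ v * ψ c := by
    simp [L, hψ]
  have hLc (x y u v : R) (m : ℕ) : (L x y u v).coeff m =
      x * s.coeff m + y * g.coeff m + u * b.coeff m + v * c.coeff m := by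
    simp [L]
  let s1 := Polynomial.X * L (h * (k ^ 2 + k' ^ 2)) (h * (k ^ 2 - k' ^ 2))
      (h * f * (a * k + a' * k')) (h * e * (a' * k + a * k'))
    + L (e * f - a ^ 2 - a' ^ 2) (- (k ^ 2 - k' ^ 2))
      (- (f * (a * k + a' * k'))) (- (e * (a' * k + a * k')))
  let g1 := Polynomial.X * L (h * (k ^ 2 - k' ^ 2)) (h * (k ^ 2 + k' ^ 2))
      (h * f * (a * k - a' * k')) (h * e * (a' * k - a * k'))
    + L (k ^ 2 - k' ^ 2) (- (e * f) - a ^ 2 - a' ^ 2)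
      (f * (a * k - a' * k')) (e * (a' * k - a * k'))
  let b1 := Polynomial.X * L 0 0 1 0
    + L (e * (a * k + a' * k')) (e * (a * k - a' * k')) (- (a * k) ^ 2 - (a' * k') ^ 2) (e ^ 2)
  let c1 := Polynomial.X * L 0 0 0 1
    + L (f * (a' * k + a * k')) (f * (a' * k - a * k')) (f ^ 2) (- (a' * k) ^ 2 - (a * k') ^ 2)
  refine ⟨s1, g1, b1, c1, ?_, ?_, ?_, ?_, ?_, ?_, ?_⟩
  · rintro (_ | m) hm
    · omega
    · simp [s1, hLc, hs m (by omega), hg m (by omega), hb m (by omega), hc m (by omega),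
        hs (m + 1) (by omega), hg (m + 1) (by omega), hb (m + 1) (by omega), hc (m + 1) (by omega)]
  · rintro (_ | m) hm
    · omega
    · simp [g1, hLc, hs m (by omega), hg m (by omega), hb m (by omega), hc m (by omega),
        hs (m + 1) (by omega), hg (m + 1) (by omega), hb (m + 1) (by omega), hc (m + 1) (by omega)]
  · rintro (_ | m) hm
    · omega
    · simp [b1, hLc, hb m (by omega), hc m (by omega),
        hs (m + 1) (by omega), hg (m + 1) (by omega), hb (m + 1) (by omega), hc (m + 1) (by omega)]
  · rintro (_ | m) hm
    · omega
    · simp [c1, hLc, hb m (by omega), hc m (by omega),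
        hs (m + 1) (by omega), hg (m + 1) (by omega), hb (m + 1) (by omega), hc (m + 1) (by omega)]
  · simp only [s1, g1, Polynomial.coeff_add, Polynomial.coeff_X_mul, hLc, hb n le_rfl, hc n le_rfl,
        hs (n + 1) (by omega), hg (n + 1) (by omega), hb (n + 1) (by omega), hc (n + 1) (by omega)]
    rw [← hP]
    linear_combination (k ^ 2 * (s.coeff n + g.coeff n)) * hh
  · simp only [s1, g1, Polynomial.coeff_add, Polynomial.coeff_X_mul, hLc, hb n le_rfl, hc n le_rfl,
        hs (n + 1) (by omega), hg (n + 1) (by omega), hb (n + 1) (by omega), hc (n + 1) (by omega)]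
    rw [← hP']
    linear_combination (k' ^ 2 * (g.coeff n - s.coeff n)) * hh
  · simp only [s1, g1, b1, c1, map_add, map_mul, hX, hL, map_sub, map_neg, map_pow, map_zero,
      map_one]
    generalize φ h = h at *
    generalize φ k = k at *
    generalize φ k' = k' at *
    generalize φ a = a at *
    generalize φ a' = a' at *
    generalize φ e = e at *
    generalize φ f = f at *
    generalize ψ s = s at *
    generalize ψ g = g at *
    generalize ψ b = b at *
    generalize ψ c = c at *
    ext i j
    fin_cases i <;> fin_cases j <;> simp [Matrix.mul_apply, Fin.sum_univ_two]
    all_goals clear hP hP' hs hg hb hc hX hψ hL hLc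
    all_goals grind

/-- The decomposition of the monodromy matrix. -/
theorem aux_main (R : Type) [CommRing R] [Algebra ℂ R] (ξ : ℂ) (N : ℕ) :
    ∀ (e f k kinv : Fin N → R) (_ : ∀ i, k i * kinv i = 1) (a : Fin N → ℂ) (_ : ∀ i, a i ≠ 0),
    ∃ s g b c : Polynomial R,
      (∀ m, N < m → s.coeff m = 0) ∧ (∀ m, N < m → g.coeff m = 0) ∧
      (∀ m, N ≤ m → b.coeff m = 0) ∧ (∀ m, N ≤ m → c.coeff m = 0) ∧
      s.coeff N + g.coeff N = algebraMap ℂ R ξ * ∏ i : Fin N, (k i) ^ 2 ∧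
      g.coeff N - s.coeff N = algebraMap ℂ R ξ⁻¹ * ∏ i : Fin N, (kinv i) ^ 2 ∧
      That N e f k kinv ξ a =
        !![(T 1 + T (-1)) * Polynomial.aeval (T 2 + T (-2) : LaurentPolynomial R) s
            + (T 1 - T (-1)) * Polynomial.aeval (T 2 + T (-2) : LaurentPolynomial R) g,
           (T 1 ^ 2 - T (-1) ^ 2) * Polynomial.aeval (T 2 + T (-2) : LaurentPolynomial R) b;
           (T 1 ^ 2 - T (-1) ^ 2) * Polynomial.aeval (T 2 + T (-2) : LaurentPolynomial R) c,
           (T 1 + T (-1)) * Polynomial.aeval (T 2 + T (-2) : LaurentPolynomial R) s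
            - (T 1 - T (-1)) * Polynomial.aeval (T 2 + T (-2) : LaurentPolynomial R) g] := by
  have halg (x : ℂ) : algebraMap ℂ (LaurentPolynomial R) x = C (algebraMap ℂ R x) := rfl
  have hh : (2 : R) * algebraMap ℂ R 2⁻¹ = 1 := by
    rw [← map_ofNat (algebraMap ℂ R) 2, ← map_mul]; norm_num
  have hhC : (2 : LaurentPolynomial R) * C (algebraMap ℂ R 2⁻¹) = 1 := by
    rw [← map_ofNat (C : R →+* LaurentPolynomial R) 2, ← map_mul, hh, map_one]
  induction N with
  | zero =>
    intro e f k kinv hk a ha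
    refine ⟨Polynomial.C (algebraMap ℂ R 2⁻¹ * (algebraMap ℂ R ξ - algebraMap ℂ R ξ⁻¹)),
      Polynomial.C (algebraMap ℂ R 2⁻¹ * (algebraMap ℂ R ξ + algebraMap ℂ R ξ⁻¹)), 0, 0,
      ?_, ?_, ?_, ?_, ?_, ?_, ?_⟩
    · intro m hm
      exact Polynomial.coeff_C_of_ne_zero (by omega)
    · intro m hm
      exact Polynomial.coeff_C_of_ne_zero (by omega)
    · simp
    · simp
    · simp only [Polynomial.coeff_C_zero, Finset.univ_eq_empty, Finset.prod_empty]
      linear_combination (algebraMap ℂ R ξ) * hh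
    · simp only [Polynomial.coeff_C_zero, Finset.univ_eq_empty, Finset.prod_empty]
      linear_combination (algebraMap ℂ R ξ⁻¹) * hh
    · have e1 (r : R) : Polynomial.aeval (T 2 + T (-2) : LaurentPolynomial R) (Polynomial.C r)
          = C r := by rw [Polynomial.aeval_C]; rfl
      simp only [That, thatGen, refK, List.ofFn_zero, List.prod_nil, List.reverse_nil, one_mul,
        mul_one, e1, halg, map_mul, map_add, map_sub, map_zero, mul_zero]
      congr! 3
      · linear_combination (-(C (algebraMap ℂ R ξ) * T 1 - C (algebraMap ℂ R ξ⁻¹) * T (-1))) * hhC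
      · congr! 2
        linear_combination (-(C (algebraMap ℂ R ξ) * T (-1) - C (algebraMap ℂ R ξ⁻¹) * T 1)) * hhC
  | succ n ih =>
    intro e f k kinv hk a ha
    obtain ⟨s, g, b, c, hs, hg, hb, hc, hP, hP', hT⟩ := ih (fun i => e i.succ) (fun i => f i.succ)
      (fun i => k i.succ) (fun i => kinv i.succ) (fun i => hk i.succ) (fun i => a i.succ)
      (fun i => ha i.succ)
    obtain ⟨s1, g1, b1, c1, h1, h2, h3, h4, h5, h6, h7⟩ := aux_step (C : R →+* LaurentPolynomial R)
      (Polynomial.aeval (T 2 + T (-2) : LaurentPolynomial R)).toRingHom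
      (fun r => by
        change Polynomial.aeval (T 2 + T (-2) : LaurentPolynomial R) (Polynomial.C r) = _
        rw [Polynomial.aeval_C]; rfl)
      (T 1) (T (-1)) (by rw [← T_add]; simp)
      (by
        change Polynomial.aeval (T 2 + T (-2) : LaurentPolynomial R) Polynomial.X = _
        rw [Polynomial.aeval_X, T_pow, T_pow]; norm_num)
      n (algebraMap ℂ R 2⁻¹) (e 0) (f 0) (k 0) (kinv 0) (algebraMap ℂ R (a 0))
      (algebraMap ℂ R (a 0)⁻¹) hh (hk 0) (by rw [← map_mul, mul_inv_cancel₀ (ha 0), map_one])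
      s g b c _ _ hs hg hb hc hP hP'
    refine ⟨s1, g1, b1, c1, h1, h2, h3, h4, ?_, ?_, ?_⟩
    · rw [h5, Fin.prod_univ_succ]; ring
    · rw [h6, Fin.prod_univ_succ]; ring
    · refine Eq.trans ?_ h7
      refine Eq.trans ?_ (congrArg (fun M => _ * M * _) hT)
      simp only [That, thatGen, List.ofFn_succ, List.prod_cons, List.reverse_cons,
        List.prod_append, List.prod_nil, mul_one, lax, halg, mul_assoc]

/-- the spectral invariant is a polynomial in `λ = z² + z⁻²`: there is a
polynomial `q` of degree at most `2N` with
`t̂(z)² − det T̂(z) = (z − z⁻¹)²·q(z² + z⁻²)`, whose coefficient of `X^{2N}` is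
`((P + P⁻¹)/2)²` with `P = ξ·Π_j k_j²`. -/
theorem spectral_invariant_polynomial_in_lambda (R : Type) [CommRing R] [Algebra ℂ R]
    (N : ℕ) (hN : 1 ≤ N) (e f k kinv : Fin N → R) (hk : ∀ i, k i * kinv i = 1)
    (ξ : ℂ) (hξ : ξ ≠ 0) (a : Fin N → ℂ) (ha : ∀ i, a i ≠ 0) :
    ∃ q : Polynomial R, q.natDegree ≤ 2 * N ∧
      (tHat N e f k kinv ξ a) ^ 2 - (That N e f k kinv ξ a).det
        = (T 1 - T (-1)) ^ 2 * Polynomial.aeval (T 2 + T (-2) : LaurentPolynomial R) q ∧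
      q.coeff (2 * N)
        = ((2 : ℂ)⁻¹ • (algebraMap ℂ R ξ * ∏ i : Fin N, (k i) ^ 2
            + algebraMap ℂ R ξ⁻¹ * ∏ i : Fin N, (kinv i) ^ 2)) ^ 2 := by
  obtain ⟨s, g, b, c, hs, hg, hb, hc, hP, hP', hT⟩ := aux_main R ξ N e f k kinv hk a ha
  have hh : (2 : R) * algebraMap ℂ R 2⁻¹ = 1 := by
    rw [← map_ofNat (algebraMap ℂ R) 2, ← map_mul]; norm_num
  have hgd : g.natDegree ≤ N := Polynomial.natDegree_le_iff_coeff_eq_zero.2 hg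
  have hbd : b.natDegree ≤ N - 1 :=
    Polynomial.natDegree_le_iff_coeff_eq_zero.2 fun m hm => hb m (by omega)
  have hcd : c.natDegree ≤ N - 1 :=
    Polynomial.natDegree_le_iff_coeff_eq_zero.2 fun m hm => hc m (by omega)
  have hg2 : (g ^ 2).natDegree ≤ 2 * N := Polynomial.natDegree_pow_le_of_le 2 hgd
  have hX2 : (Polynomial.X + 2 : Polynomial R).natDegree ≤ 1 :=
    Polynomial.natDegree_add_le_of_degree_le Polynomial.natDegree_X_le
      ((Polynomial.natDegree_ofNat 2).le.trans (by omega))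
  have hr : ((Polynomial.X + 2) * (b * c)).natDegree ≤ 1 + ((N - 1) + (N - 1)) :=
    Polynomial.natDegree_mul_le_of_le hX2 (Polynomial.natDegree_mul_le_of_le hbd hcd)
  have hgN : g.coeff N = (2 : ℂ)⁻¹ • (algebraMap ℂ R ξ * ∏ i : Fin N, (k i) ^ 2
            + algebraMap ℂ R ξ⁻¹ * ∏ i : Fin N, (kinv i) ^ 2) := by
    rw [← hP, ← hP', Algebra.smul_def]
    linear_combination (-g.coeff N) * hh
  refine ⟨g ^ 2 + (Polynomial.X + 2) * (b * c), ?_, ?_, ?_⟩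
  · exact Polynomial.natDegree_add_le_of_degree_le hg2 (hr.trans (by omega))
  · have ht : tHat N e f k kinv ξ a =
        (T 1 + T (-1)) * Polynomial.aeval (T 2 + T (-2) : LaurentPolynomial R) s := by
      rw [tHat, hT, Matrix.trace_fin_two_of, add_add_sub_cancel, ← two_smul ℂ, smul_smul]
      norm_num
    have hzw : (T 1 * T (-1) : LaurentPolynomial R) = 1 := by rw [← T_add]; simp
    have hl : (T 2 + T (-2) : LaurentPolynomial R) = T 1 ^ 2 + T (-1) ^ 2 := by
      rw [T_pow, T_pow]; norm_num
    rw [ht, hT, Matrix.det_fin_two_of]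
    simp only [map_add, map_mul, map_pow, Polynomial.aeval_X, map_ofNat]
    generalize Polynomial.aeval (T 2 + T (-2) : LaurentPolynomial R) s = s'
    generalize Polynomial.aeval (T 2 + T (-2) : LaurentPolynomial R) g = g'
    generalize Polynomial.aeval (T 2 + T (-2) : LaurentPolynomial R) b = b'
    generalize Polynomial.aeval (T 2 + T (-2) : LaurentPolynomial R) c = c'
    rw [hl]
    linear_combination (2 * (T 1 - T (-1)) ^ 2 * b' * c') * hzw
  · rw [Polynomial.coeff_add, Polynomial.coeff_eq_zero_of_natDegree_lt (lt_of_le_of_lt hr (by omega)),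
      add_zero, Polynomial.coeff_pow_of_natDegree_le hgd, hgN]

end
end

section
/- (Separation-of-variables structure of the entry Ĉ.) Let Ĉ(z) be the (2,1) entry of the N-site reflection monodromy matrix T̂(z). Then there exists a unique polynomial c ∈ R[X] of degree at most N − 1 such that Ĉ(z) = (z² − z⁻²)·c(z² + z⁻²) in R[z,z⁻¹], and the coefficient of X^{N−1} in c equals Q = Σ_{j=1}^{N} f_j·( ξ(k_j/a_j)·Π_{i>j} k_i² − ξ⁻¹(a_j/k_j)·Π_{i>j} k_i⁻² ). -/
open LaurentPolynomial

noncomputable section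

/-- The leading coefficient `Q = Σ_j f_j·(ξ(k_j/a_j)·Π_{i>j} k_i² − ξ⁻¹(a_j/k_j)·Π_{i>j} k_i⁻²)`
of Sklyanin's separated polynomial `C̃(λ)`. -/
noncomputable def Qlead {R : Type} [CommRing R] [Algebra ℂ R] (N : ℕ)
    (f k kinv : Fin N → R) (ξ : ℂ) (a : Fin N → ℂ) : R :=
  ∑ j : Fin N, f j *
    (algebraMap ℂ R ξ * (k j * algebraMap ℂ R (a j)⁻¹)
        * ∏ i ∈ Finset.univ.filter (fun i => j < i), (k i) ^ 2
      - algebraMap ℂ R ξ⁻¹ * (algebraMap ℂ R (a j) * kinv j)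
        * ∏ i ∈ Finset.univ.filter (fun i => j < i), (kinv i) ^ 2)

theorem algMap_eq {R : Type} [CommRing R] [Algebra ℂ R] (x : ℂ) :
    algebraMap ℂ (LaurentPolynomial R) x = C (algebraMap ℂ R x) := by
  rw [IsScalarTower.algebraMap_apply ℂ R (LaurentPolynomial R)]
  rfl

theorem thatGen_succ {R : Type} [CommRing R] [Algebra ℂ R] (N : ℕ)
    (e f k kinv : Fin (N + 1) → R) (ξ : ℂ) (a : Fin (N + 1) → ℂ) (u v : LaurentPolynomial R) :
    thatGen (N + 1) e f k kinv ξ a u v =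
      lax (e 0) (f 0) (k 0) (kinv 0) (C (algebraMap ℂ R (a 0)) * u)
        (C (algebraMap ℂ R (a 0)⁻¹) * v)
      * thatGen N (fun i => e i.succ) (fun i => f i.succ) (fun i => k i.succ)
          (fun i => kinv i.succ) ξ (fun i => a i.succ) u v
      * lax (e 0) (f 0) (k 0) (kinv 0) (C (algebraMap ℂ R (a 0)⁻¹) * u)
        (C (algebraMap ℂ R (a 0)) * v) := by
  simp only [thatGen, List.ofFn_succ, List.prod_cons, List.reverse_cons, List.prod_append,
    List.prod_nil, mul_one, algMap_eq, mul_assoc]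

theorem Qlead_succ {R : Type} [CommRing R] [Algebra ℂ R] (N : ℕ)
    (f k kinv : Fin (N + 1) → R) (ξ : ℂ) (a : Fin (N + 1) → ℂ) :
    Qlead (N + 1) f k kinv ξ a =
      f 0 * (algebraMap ℂ R ξ * (k 0 * algebraMap ℂ R (a 0)⁻¹) * ∏ i : Fin N, k i.succ ^ 2
        - algebraMap ℂ R ξ⁻¹ * (algebraMap ℂ R (a 0) * kinv 0) * ∏ i : Fin N, kinv i.succ ^ 2)
      + Qlead N (fun i => f i.succ) (fun i => k i.succ) (fun i => kinv i.succ) ξ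
          (fun i => a i.succ) := by
  simp only [Qlead, Fin.sum_univ_succ, Finset.prod_filter, Fin.prod_univ_succ, Fin.succ_lt_succ_iff,
    Fin.succ_pos, if_true, if_false, one_mul, Fin.not_lt_zero]

/-- The structural invariant of the reflection monodromy matrix. -/
theorem structure_That {R : Type} [CommRing R] [Algebra ℂ R] (ξ : ℂ) (N : ℕ) :
    ∀ (e f k kinv : Fin N → R) (_ : ∀ i, k i * kinv i = 1) (a : Fin N → ℂ) (_ : ∀ i, a i ≠ 0),
    ∃ p q b c : Polynomial R,
      (∀ m, N < m → p.coeff m = 0) ∧ (∀ m, N < m → q.coeff m = 0) ∧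
      (∀ m, N ≤ m → b.coeff m = 0) ∧ (∀ m, N ≤ m → c.coeff m = 0) ∧
      p.coeff N = algebraMap ℂ R ξ * ∏ i, k i ^ 2 ∧
      q.coeff N = - (algebraMap ℂ R ξ⁻¹ * ∏ i, kinv i ^ 2) ∧
      (Polynomial.X * c).coeff N = Qlead N f k kinv ξ a ∧
      That N e f k kinv ξ a =
        !![T 1 * Polynomial.aeval (T 2 + T (-2) : LaurentPolynomial R) p
            + T (-1) * Polynomial.aeval (T 2 + T (-2) : LaurentPolynomial R) q,
          (T 2 - T (-2)) * Polynomial.aeval (T 2 + T (-2) : LaurentPolynomial R) b;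
          (T 2 - T (-2)) * Polynomial.aeval (T 2 + T (-2) : LaurentPolynomial R) c,
          T (-1) * Polynomial.aeval (T 2 + T (-2) : LaurentPolynomial R) p
            + T 1 * Polynomial.aeval (T 2 + T (-2) : LaurentPolynomial R) q] := by
  induction N with
  | zero =>
    intro e f k kinv _ a _
    refine ⟨Polynomial.C (algebraMap ℂ R ξ), Polynomial.C (- algebraMap ℂ R ξ⁻¹), 0, 0,
      ?_, ?_, ?_, ?_, ?_, ?_, ?_, ?_⟩
    · intro m hm
      rw [Polynomial.coeff_C, if_neg (by omega)]
    · intro m hm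
      rw [Polynomial.coeff_C, if_neg (by omega)]
    · simp
    · simp
    · simp
    · simp
    · simp [Qlead]
    · simp only [That, thatGen, refK, List.ofFn_zero, List.prod_nil, List.reverse_nil, one_mul,
        mul_one, algMap_eq, Polynomial.aeval_C, map_neg, map_zero, mul_zero,
        LaurentPolynomial.algebraMap_apply]
      ext i j : 2
      fin_cases i <;> fin_cases j <;> simp <;> ring
  | succ N ih =>
    intro e f k kinv hk a ha
    obtain ⟨p, q, b, c, hp, hq, hb, hc, hpN, hqN, hcN, hT⟩ :=
      ih (fun i => e i.succ) (fun i => f i.succ) (fun i => k i.succ)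
          (fun i => kinv i.succ) (fun i => hk _) (fun i => a i.succ) (fun i => ha _)
    have hQ := Qlead_succ N f k kinv ξ a
    have hkk := hk 0
    have haa : algebraMap ℂ R (a 0) * algebraMap ℂ R (a 0)⁻¹ = 1 := by
      rw [← map_mul, mul_inv_cancel₀ (ha 0), map_one]
    have hTs := thatGen_succ N e f k kinv ξ a (T 1) (T (-1))
    rw [← That, ← That, hT] at hTs
    generalize algebraMap ℂ R (a 0) = α at *
    generalize algebraMap ℂ R (a 0)⁻¹ = β at *
    have hz : (T 1 * T (-1) : LaurentPolynomial R) = 1 := by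
      rw [← T_add]; simp
    have h2 : (T 2 : LaurentPolynomial R) = T 1 ^ 2 := by
      rw [T_pow]; norm_num
    have h2' : (T (-2) : LaurentPolynomial R) = T (-1) ^ 2 := by
      rw [T_pow]; norm_num
    refine ⟨
      Polynomial.C (k 0 ^ 2) * (Polynomial.X * p) - Polynomial.C (α ^ 2 + β ^ 2) * p
        + Polynomial.C (k 0 ^ 2 - kinv 0 ^ 2 + e 0 * f 0) * q
        + Polynomial.C (f 0 * (α * k 0)) * (Polynomial.X * b)
        - Polynomial.C (2 * f 0 * (β * kinv 0)) * b
        + Polynomial.C (e 0 * (β * k 0)) * (Polynomial.X * c)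
        - Polynomial.C (2 * e 0 * (α * kinv 0)) * c,
      Polynomial.C (kinv 0 ^ 2) * (Polynomial.X * q) - Polynomial.C (α ^ 2 + β ^ 2) * q
        + Polynomial.C (kinv 0 ^ 2 - k 0 ^ 2 + e 0 * f 0) * p
        + Polynomial.C (f 0 * (β * kinv 0)) * (Polynomial.X * b)
        - Polynomial.C (2 * f 0 * (α * k 0)) * b
        + Polynomial.C (e 0 * (α * kinv 0)) * (Polynomial.X * c)
        - Polynomial.C (2 * e 0 * (β * k 0)) * c,
      Polynomial.C (e 0 * (α * k 0)) * p + Polynomial.C (e 0 * (β * kinv 0)) * q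
        + Polynomial.X * b - Polynomial.C ((α * k 0) ^ 2 + (β * kinv 0) ^ 2) * b
        + Polynomial.C (e 0 ^ 2) * c,
      Polynomial.C (f 0 * (β * k 0)) * p + Polynomial.C (f 0 * (α * kinv 0)) * q
        + Polynomial.X * c - Polynomial.C ((β * k 0) ^ 2 + (α * kinv 0) ^ 2) * c
        + Polynomial.C (f 0 ^ 2) * b,
      ?_, ?_, ?_, ?_, ?_, ?_, ?_, ?_⟩
    · intro m hm
      obtain ⟨m, rfl⟩ : ∃ l, m = l + 1 := ⟨m - 1, by omega⟩
      simp only [Polynomial.coeff_add, Polynomial.coeff_sub, Polynomial.coeff_C_mul,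
        Polynomial.coeff_X_mul]
      rw [hp m (by omega), hp (m + 1) (by omega), hq (m + 1) (by omega), hb m (by omega),
        hb (m + 1) (by omega), hc m (by omega), hc (m + 1) (by omega)]
      ring
    · intro m hm
      obtain ⟨m, rfl⟩ : ∃ l, m = l + 1 := ⟨m - 1, by omega⟩
      simp only [Polynomial.coeff_add, Polynomial.coeff_sub, Polynomial.coeff_C_mul,
        Polynomial.coeff_X_mul]
      rw [hq m (by omega), hp (m + 1) (by omega), hq (m + 1) (by omega), hb m (by omega),
        hb (m + 1) (by omega), hc m (by omega), hc (m + 1) (by omega)]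
      ring
    · intro m hm
      obtain ⟨m, rfl⟩ : ∃ l, m = l + 1 := ⟨m - 1, by omega⟩
      simp only [Polynomial.coeff_add, Polynomial.coeff_sub, Polynomial.coeff_C_mul,
        Polynomial.coeff_X_mul]
      rw [hp (m + 1) (by omega), hq (m + 1) (by omega), hb m (by omega),
        hb (m + 1) (by omega), hc (m + 1) (by omega)]
      ring
    · intro m hm
      obtain ⟨m, rfl⟩ : ∃ l, m = l + 1 := ⟨m - 1, by omega⟩
      simp only [Polynomial.coeff_add, Polynomial.coeff_sub, Polynomial.coeff_C_mul,
        Polynomial.coeff_X_mul]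
      rw [hp (m + 1) (by omega), hq (m + 1) (by omega), hc m (by omega),
        hb (m + 1) (by omega), hc (m + 1) (by omega)]
      ring
    · simp only [Polynomial.coeff_add, Polynomial.coeff_sub, Polynomial.coeff_C_mul,
        Polynomial.coeff_X_mul]
      rw [hpN, hp (N + 1) (by omega), hq (N + 1) (by omega), hb N (by omega),
        hb (N + 1) (by omega), hc N (by omega), hc (N + 1) (by omega), Fin.prod_univ_succ]
      ring
    · simp only [Polynomial.coeff_add, Polynomial.coeff_sub, Polynomial.coeff_C_mul,
        Polynomial.coeff_X_mul]
      rw [hqN, hp (N + 1) (by omega), hq (N + 1) (by omega), hb N (by omega),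
        hb (N + 1) (by omega), hc N (by omega), hc (N + 1) (by omega), Fin.prod_univ_succ]
      ring
    · rw [Polynomial.coeff_X_mul]
      simp only [Polynomial.coeff_add, Polynomial.coeff_sub, Polynomial.coeff_C_mul]
      rw [hcN, hpN, hqN, hb N le_rfl, hc N le_rfl, hQ]
      ring
    · rw [hTs]
      have hkC : (C (k 0) * C (kinv 0) : LaurentPolynomial R) = 1 := by
        rw [← map_mul, hkk, map_one]
      have haC : (C α * C β : LaurentPolynomial R) = 1 := by
        rw [← map_mul, haa, map_one]
      simp only [map_add, map_sub, map_mul, map_pow, Polynomial.aeval_C, Polynomial.aeval_X,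
        LaurentPolynomial.algebraMap_apply, map_ofNat, lax, h2, h2']
      generalize (Polynomial.aeval (T 1 ^ 2 + T (-1) ^ 2 : LaurentPolynomial R)) p = P
      generalize (Polynomial.aeval (T 1 ^ 2 + T (-1) ^ 2 : LaurentPolynomial R)) q = Q
      generalize (Polynomial.aeval (T 1 ^ 2 + T (-1) ^ 2 : LaurentPolynomial R)) b = B
      generalize (Polynomial.aeval (T 1 ^ 2 + T (-1) ^ 2 : LaurentPolynomial R)) c = G
      generalize (T 1 : LaurentPolynomial R) = z at *
      generalize (T (-1) : LaurentPolynomial R) = v at *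
      generalize (C (k 0) : LaurentPolynomial R) = K at *
      generalize (C (kinv 0) : LaurentPolynomial R) = K' at *
      generalize (C α : LaurentPolynomial R) = A at *
      generalize (C β : LaurentPolynomial R) = A' at *
      generalize (C (e 0) : LaurentPolynomial R) = E at *
      generalize (C (f 0) : LaurentPolynomial R) = F at *
      rw [Matrix.mul_fin_two, Matrix.mul_fin_two]
      have mext : ∀ x y w t x' y' w' t' : LaurentPolynomial R, x = x' → y = y' → w = w' → t = t' →
          !![x, y; w, t] = !![x', y'; w', t'] := by
        rintro x y w t _ _ _ _ rfl rfl rfl rfl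
        rfl
      apply mext
      · linear_combination haC * (K ^ 2 * z ^ 2 + K' ^ 2 * v ^ 2) * (z * P + v * Q)
          - (A ^ 2 + A' ^ 2) * (z * P + v * Q) * (K * K' * hz + hkC)
          + hz * (P * (K' ^ 2 - K ^ 2) * v + Q * (K ^ 2 - K' ^ 2) * z)
          - 2 * F * B * (A * K * v + A' * K' * z) * hz
          - 2 * E * G * (A' * K * v + A * K' * z) * hz
      · linear_combination B * (z ^ 2 - v ^ 2) * ((z ^ 2 + v ^ 2) * (K * K' * haC + hkC)
          - (A ^ 2 * K ^ 2 + A' ^ 2 * K' ^ 2) * hz)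
      · linear_combination G * (z ^ 2 - v ^ 2) * ((z ^ 2 + v ^ 2) * (K * K' * haC + hkC)
          - (A' ^ 2 * K ^ 2 + A ^ 2 * K' ^ 2) * hz)
      · linear_combination haC * (K ^ 2 * v ^ 2 + K' ^ 2 * z ^ 2) * (v * P + z * Q)
          - (A ^ 2 + A' ^ 2) * (v * P + z * Q) * (K * K' * hz + hkC)
          + hz * (P * (K' ^ 2 - K ^ 2) * z + Q * (K ^ 2 - K' ^ 2) * v)
          - 2 * F * B * (A * K * z + A' * K' * v) * hz
          - 2 * E * G * (A' * K * z + A * K' * v) * hz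

theorem coeff_T_mul' {R : Type} [CommRing R] (n m : ℤ) (g : LaurentPolynomial R) :
    (T n * g).coeff m = g.coeff (m - n) := by
  rw [T, AddMonoidAlgebra.coeff_single_mul_apply, one_mul]
  congr 1
  ring

theorem lam_pow_coeff {R : Type} [CommRing R] (n : ℕ) :
    (∀ m : ℤ, 2 * (n : ℤ) < m → ((T 2 + T (-2) : LaurentPolynomial R) ^ n).coeff m = 0) ∧
      ((T 2 + T (-2) : LaurentPolynomial R) ^ n).coeff (2 * (n : ℤ)) = 1 := by
  induction n with
  | zero =>
    rw [pow_zero, ← T_zero]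
    refine ⟨fun m hm => ?_, ?_⟩
    · rw [T_apply, if_neg (by push_cast at hm; omega)]
    · simp
  | succ n ih =>
    have key : ∀ m : ℤ, ((T 2 + T (-2) : LaurentPolynomial R) ^ (n + 1)).coeff m =
        ((T 2 + T (-2) : LaurentPolynomial R) ^ n).coeff (m - 2)
        + ((T 2 + T (-2) : LaurentPolynomial R) ^ n).coeff (m - -2) := by
      intro m
      rw [pow_succ', add_mul, AddMonoidAlgebra.coeff_add, Finsupp.add_apply, coeff_T_mul',
        coeff_T_mul']
    refine ⟨fun m hm => ?_, ?_⟩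
    · push_cast at hm
      rw [key, ih.1 _ (by omega), ih.1 _ (by omega), add_zero]
    · rw [key, ih.1 (_ - -2) (by push_cast; omega), add_zero, ← ih.2]
      congr 1
      push_cast
      ring

theorem sep_inj {R : Type} [CommRing R] (c : Polynomial R)
    (h : (T 2 - T (-2)) * Polynomial.aeval (T 2 + T (-2) : LaurentPolynomial R) c = 0) :
    c = 0 := by
  have key : ∀ m : ℤ, (Polynomial.aeval (T 2 + T (-2) : LaurentPolynomial R) c).coeff m =
      ∑ i ∈ Finset.range (c.natDegree + 1),
        c.coeff i * ((T 2 + T (-2) : LaurentPolynomial R) ^ i).coeff m := by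
    intro m
    rw [Polynomial.aeval_eq_sum_range, AddMonoidAlgebra.coeff_sum, Finsupp.finsetSum_apply]
    rfl
  have h1 := congrArg (fun g : LaurentPolynomial R => g.coeff (2 * (c.natDegree : ℤ) + 2)) h
  simp only [sub_mul, AddMonoidAlgebra.coeff_sub, Finsupp.sub_apply, coeff_T_mul', key] at h1
  rw [Finset.sum_range_succ, Finset.sum_eq_zero, Finset.sum_eq_zero, zero_add,
    add_sub_cancel_right, (lam_pow_coeff _).2] at h1
  · simpa using h1
  · intro i hi
    rw [Finset.mem_range] at hi
    rw [(lam_pow_coeff i).1 _ (by omega), mul_zero]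
  · intro i hi
    rw [Finset.mem_range] at hi
    rw [(lam_pow_coeff i).1 _ (by omega), mul_zero]

/-- separation-of-variables structure of the entry `Ĉ(z)` of the reflection
monodromy matrix: there is a unique polynomial `c` of degree at most `N − 1` with
`Ĉ(z) = (z² − z⁻²)·c(z² + z⁻²)`, and its coefficient of `X^{N−1}` equals `Q`. -/
theorem separated_polynomial_C (R : Type) [CommRing R] [Algebra ℂ R]
    (N : ℕ) (hN : 1 ≤ N) (e f k kinv : Fin N → R) (hk : ∀ i, k i * kinv i = 1)
    (ξ : ℂ) (hξ : ξ ≠ 0) (a : Fin N → ℂ) (ha : ∀ i, a i ≠ 0) :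
    (∃! c : Polynomial R, c.natDegree ≤ N - 1 ∧
        That N e f k kinv ξ a 1 0
          = (T 2 - T (-2)) * Polynomial.aeval (T 2 + T (-2) : LaurentPolynomial R) c) ∧
    ∀ c : Polynomial R, (c.natDegree ≤ N - 1 ∧
        That N e f k kinv ξ a 1 0
          = (T 2 - T (-2)) * Polynomial.aeval (T 2 + T (-2) : LaurentPolynomial R) c) →
      c.coeff (N - 1) = Qlead N f k kinv ξ a := by
  obtain ⟨p, q, b, c, -, -, -, hc, -, -, hcN, hT⟩ := structure_That ξ N e f k kinv hk a ha
  have h10 : That N e f k kinv ξ a 1 0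
      = (T 2 - T (-2)) * Polynomial.aeval (T 2 + T (-2) : LaurentPolynomial R) c := by
    rw [hT]; rfl
  have huniq : ∀ d : Polynomial R, That N e f k kinv ξ a 1 0
      = (T 2 - T (-2)) * Polynomial.aeval (T 2 + T (-2) : LaurentPolynomial R) d → d = c := by
    intro d hd
    rw [← sub_eq_zero]
    apply sep_inj
    rw [map_sub, mul_sub, ← hd, ← h10, sub_self]
  refine ⟨⟨c, ⟨?_, h10⟩, fun d hd => huniq d hd.2⟩, ?_⟩
  · rw [Polynomial.natDegree_le_iff_coeff_eq_zero]
    intro m hm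
    exact hc m (by omega)
  · rintro d ⟨-, hd⟩
    rw [huniq d hd, ← hcN]
    obtain ⟨M, rfl⟩ : ∃ M, N = M + 1 := ⟨N - 1, by omega⟩
    rw [Polynomial.coeff_X_mul, Nat.add_sub_cancel]

end
end

section
/- (Log-canonical bracket of the asymptotic coordinates, part of Proposition 4.1.) Let R be a commutative ℂ-algebra with elements e₁,…,e_N, f₁,…,f_N, units k₁,…,k_N, nonzero complex scalars ξ, a₁,…,a_N, and a Poisson bracket satisfying the site-wise relations {kᵢ,eᵢ} = kᵢeᵢ, {kᵢ,fᵢ} = −kᵢfᵢ, {eᵢ,fᵢ} = 2(kᵢ² − kᵢ⁻²), with all brackets between generators at distinct sites and among the kᵢ vanishing. Define P = ξ·Π_{j=1}^{N} k_j² and Q = Σ_{j=1}^{N} f_j·( ξ(k_j/a_j)·Π_{i>j} k_i² − ξ⁻¹(a_j/k_j)·Π_{i>j} k_i⁻² ). Then {Q, P} = 2QP. -/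
noncomputable section

/-- A Poisson bracket on a commutative `ℂ`-algebra `R`: a `ℂ`-bilinear, antisymmetric map
satisfying the Jacobi identity and the Leibniz rule in each argument. -/
structure PoissonBracket (R : Type) [CommRing R] [Algebra ℂ R] where
  bracket : R → R → R
  add_left : ∀ a b c : R, bracket (a + b) c = bracket a c + bracket b c
  smul_left : ∀ (s : ℂ) (a b : R), bracket (s • a) b = s • bracket a b
  add_right : ∀ a b c : R, bracket a (b + c) = bracket a b + bracket a c
  smul_right : ∀ (s : ℂ) (a b : R), bracket a (s • b) = s • bracket a b
  antisymm : ∀ a b : R, bracket a b = -bracket b a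
  jacobi : ∀ a b c : R,
    bracket a (bracket b c) + bracket b (bracket c a) + bracket c (bracket a b) = 0
  leibniz_right : ∀ a b c : R, bracket a (b * c) = bracket a b * c + b * bracket a c
  leibniz_left : ∀ a b c : R, bracket (a * b) c = bracket a c * b + a * bracket b c

namespace PoissonBracket

variable {R : Type} [CommRing R] [Algebra ℂ R] (P : PoissonBracket R)

theorem one_left' (b : R) : P.bracket 1 b = 0 := by
  have h := P.leibniz_left 1 1 b
  simp only [mul_one, one_mul] at h
  exact left_eq_add.mp h

theorem zero_left' (b : R) : P.bracket 0 b = 0 := by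
  have h := P.smul_left 0 0 b
  simpa using h

theorem one_right' (b : R) : P.bracket b 1 = 0 := by
  rw [P.antisymm, P.one_left', neg_zero]

theorem algebraMap_left' (s : ℂ) (b : R) : P.bracket (algebraMap ℂ R s) b = 0 := by
  rw [Algebra.algebraMap_eq_smul_one, P.smul_left, P.one_left', smul_zero]

theorem algebraMap_right' (s : ℂ) (b : R) : P.bracket b (algebraMap ℂ R s) = 0 := by
  rw [P.antisymm, P.algebraMap_left', neg_zero]

theorem mul_left_zero {a b c : R} (ha : P.bracket a c = 0) (hb : P.bracket b c = 0) :
    P.bracket (a * b) c = 0 := by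
  rw [P.leibniz_left, ha, hb]; ring

theorem sub_left_zero {a b c : R} (ha : P.bracket a c = 0) (hb : P.bracket b c = 0) :
    P.bracket (a - b) c = 0 := by
  have h := P.add_left (a - b) b c
  rw [sub_add_cancel, ha, hb, add_zero] at h
  exact h.symm

theorem sq_left_zero {a c : R} (ha : P.bracket a c = 0) : P.bracket (a ^ 2) c = 0 := by
  rw [pow_two]; exact P.mul_left_zero ha ha

theorem prod_left_zero {ι : Type} (s : Finset ι) (g : ι → R) (c : R)
    (h : ∀ i, P.bracket (g i) c = 0) : P.bracket (∏ i ∈ s, g i) c = 0 := by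
  classical
  induction s using Finset.induction_on with
  | empty => simpa using P.one_left' c
  | insert i s hi ih =>
    rw [Finset.prod_insert hi]
    exact P.mul_left_zero (h i) ih

theorem sum_left' {ι : Type} (s : Finset ι) (g : ι → R) (c : R) :
    P.bracket (∑ i ∈ s, g i) c = ∑ i ∈ s, P.bracket (g i) c := by
  classical
  induction s using Finset.induction_on with
  | empty => simpa using P.zero_left' c
  | insert i s hi ih =>
    rw [Finset.sum_insert hi, Finset.sum_insert hi, P.add_left, ih]

theorem f_prod {ι : Type} [DecidableEq ι] (k f : ι → R)
    (hkf : ∀ i, P.bracket (k i) (f i) = -(k i * f i))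
    (hd : ∀ i j, i ≠ j → P.bracket (k i) (f j) = 0) (j : ι) (s : Finset ι) :
    P.bracket (f j) (∏ i ∈ s, (k i) ^ 2)
      = if j ∈ s then 2 * f j * ∏ i ∈ s, (k i) ^ 2 else 0 := by
  induction s using Finset.induction_on with
  | empty => simpa using P.one_right' (f j)
  | insert i s hi ih =>
    rw [Finset.prod_insert hi, P.leibniz_right, ih, pow_two, P.leibniz_right,
      P.antisymm (f j) (k i)]
    by_cases hij : i = j
    · subst hij
      rw [hkf, if_neg hi, if_pos (Finset.mem_insert_self _ _)]
      ring
    · rw [hd i j hij]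
      have : j ∈ insert i s ↔ j ∈ s := by
        rw [Finset.mem_insert]
        exact or_iff_right (fun h => hij h.symm)
      simp only [this]
      split_ifs <;> ring

end PoissonBracket

/-- the log-canonical bracket `{Q, P} = 2QP` of the asymptotic separated
coordinates `P = ξ·Π_j k_j²` and
`Q = Σ_j f_j·(ξ(k_j/a_j)·Π_{i>j} k_i² − ξ⁻¹(a_j/k_j)·Π_{i>j} k_i⁻²)`. -/
theorem log_canonical_bracket_QP (R : Type) [CommRing R] [Algebra ℂ R]
    (P : PoissonBracket R) (N : ℕ) (hN : 1 ≤ N) (e f k kinv : Fin N → R)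
    (ξ : ℂ) (hξ : ξ ≠ 0) (a : Fin N → ℂ) (ha : ∀ i, a i ≠ 0)
    (hk : ∀ i, k i * kinv i = 1)
    (hke : ∀ i, P.bracket (k i) (e i) = k i * e i)
    (hkf : ∀ i, P.bracket (k i) (f i) = -(k i * f i))
    (hef : ∀ i, P.bracket (e i) (f i) = 2 * ((k i) ^ 2 - (kinv i) ^ 2))
    (hdist : ∀ i j, i ≠ j → P.bracket (e i) (e j) = 0 ∧ P.bracket (f i) (f j) = 0 ∧
        P.bracket (e i) (f j) = 0 ∧ P.bracket (k i) (e j) = 0 ∧ P.bracket (k i) (f j) = 0)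
    (hkk : ∀ i j, P.bracket (k i) (k j) = 0) :
    letI Ptot : R := algebraMap ℂ R ξ * ∏ i : Fin N, (k i) ^ 2
    letI Q : R := ∑ j : Fin N, f j *
      (algebraMap ℂ R ξ * (k j * algebraMap ℂ R (a j)⁻¹)
          * ∏ i ∈ Finset.univ.filter (fun i => j < i), (k i) ^ 2
        - algebraMap ℂ R ξ⁻¹ * (algebraMap ℂ R (a j) * kinv j)
          * ∏ i ∈ Finset.univ.filter (fun i => j < i), (kinv i) ^ 2)
    P.bracket Q Ptot = 2 * Q * Ptot := by
  generalize hPt : algebraMap ℂ R ξ * ∏ i : Fin N, (k i) ^ 2 = Ptot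
  have hkP : ∀ i, P.bracket (k i) Ptot = 0 := by
    intro i
    rw [P.antisymm, neg_eq_zero, ← hPt]
    exact P.mul_left_zero (P.algebraMap_left' _ _)
      (P.prod_left_zero _ _ _ fun j => P.sq_left_zero (hkk j i))
  have hkinvP : ∀ i, P.bracket (kinv i) Ptot = 0 := by
    intro i
    have h := P.leibniz_left (k i) (kinv i) Ptot
    rw [hk, P.one_left', hkP, zero_mul, zero_add] at h
    calc P.bracket (kinv i) Ptot = (k i * kinv i) * P.bracket (kinv i) Ptot := by
          rw [hk, one_mul]
      _ = kinv i * (k i * P.bracket (kinv i) Ptot) := by ring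
      _ = 0 := by rw [← h, mul_zero]
  have hfP : ∀ j, P.bracket (f j) Ptot = 2 * f j * Ptot := by
    intro j
    have h := P.f_prod k f hkf (fun i j hij => (hdist i j hij).2.2.2.2) j Finset.univ
    rw [if_pos (Finset.mem_univ j)] at h
    rw [← hPt, P.leibniz_right, P.algebraMap_right', h]
    ring
  rw [P.sum_left', Finset.mul_sum, Finset.sum_mul]
  refine Finset.sum_congr rfl fun j _ => ?_
  rw [P.leibniz_left, hfP, P.sub_left_zero
    (P.mul_left_zero (P.mul_left_zero (P.algebraMap_left' _ _)
      (P.mul_left_zero (hkP j) (P.algebraMap_left' _ _)))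
      (P.prod_left_zero _ _ _ fun i => P.sq_left_zero (hkP i)))
    (P.mul_left_zero (P.mul_left_zero (P.algebraMap_left' _ _)
      (P.mul_left_zero (P.algebraMap_left' _ _) (hkinvP j)))
      (P.prod_left_zero _ _ _ fun i => P.sq_left_zero (hkinvP i)))]
  ring

end
end
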